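/- arXiv:1407.7168 — 5 statements merged into one kernel-verified Lean document; each statement's English description precedes it below -/
import Mathlib

section
/- Let m₁, …, m_n ∈ ℝⁿ be linearly independent vectors and K = {t₁m₁ + ⋯ + t_n m_n : tᵢ ≥ 0} the simplicial cone they generate. Let ξ ∈ ℝⁿ satisfy ⟨ξ, mᵢ⟩ < 0 for every i. Then x ↦ e^{⟨ξ,x⟩} is Lebesgue-integrable on K and ∫_K e^{⟨ξ,x⟩} dx = |det(m₁, …, m_n)| / ∏_{i=1}^{n} (−⟨ξ, mᵢ⟩). -/
open MeasureTheory

/-!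
The cone is the image of the closed positive orthant under the linear map `f` sending the standard
basis to the generators. A linear endomorphism scales the Haar measure of every image by `|det f|`,
even when `f` is singular, so Haar measure restricted to `f '' s` is `|det f|` times the
push-forward of Haar measure restricted to `s`. Pulled back to the orthant, `e^{⟨ξ,x⟩}` becomes a
product of exponentials of one variable with rates `⟨ξ, mᵢ⟩`.
-/

section LinearImage

variable {E F : Type*} [NormedAddCommGroup E] [NormedSpace ℝ E] [FiniteDimensional ℝ E]
  [MeasurableSpace E] [BorelSpace E] [NormedAddCommGroup F]
  (μ : Measure E) [μ.IsAddHaarMeasure] (f : E →ₗ[ℝ] E) (s : Set E) {g : E → F}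

theorem addHaar_restrict_image_linearMap :
    μ.restrict (f '' s) = ENNReal.ofReal |f.det| • (μ.restrict s).map f := by
  have hf : Measurable f := f.continuous_of_finiteDimensional.measurable
  ext t ht
  rw [Measure.restrict_apply ht, Measure.smul_apply, Measure.map_apply hf ht,
    Measure.restrict_apply (hf ht), ← Set.image_preimage_inter, Set.inter_comm,
    Measure.addHaar_image_linearMap, Set.inter_comm, smul_eq_mul]

variable {μ f s}

theorem integrableOn_image_linearMap (hg : StronglyMeasurable g)
    (hgf : IntegrableOn (fun x ↦ g (f x)) s μ) : IntegrableOn g (f '' s) μ := by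
  have hf : Measurable f := f.continuous_of_finiteDimensional.measurable
  rw [IntegrableOn, addHaar_restrict_image_linearMap]
  exact ((integrable_map_measure hg.aestronglyMeasurable hf.aemeasurable).2 hgf).smul_measure
    ENNReal.ofReal_ne_top

theorem setIntegral_image_linearMap [NormedSpace ℝ F] (hg : StronglyMeasurable g) :
    ∫ x in f '' s, g x ∂μ = |f.det| • ∫ x in s, g (f x) ∂μ := by
  have hf : Measurable f := f.continuous_of_finiteDimensional.measurable
  rw [addHaar_restrict_image_linearMap, integral_smul_measure,
    integral_map hf.aemeasurable hg.aestronglyMeasurable, ENNReal.toReal_ofReal (abs_nonneg _)]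

end LinearImage

section Exponential

open scoped Matrix

variable {ι : Type*} [Fintype ι]

theorem volume_pi_restrict_Ici (a : ι → ℝ) :
    (volume : Measure (ι → ℝ)).restrict (Set.Ici a) =
      Measure.pi fun i ↦ volume.restrict (Set.Ici (a i)) := by
  rw [← Set.pi_univ_Ici, volume_pi, Measure.restrict_pi_pi]

theorem exp_dotProduct (c t : ι → ℝ) : Real.exp (c ⬝ᵥ t) = ∏ i, Real.exp (c i * t i) :=
  Real.exp_sum _ _

theorem integrableOn_exp_dotProduct_Ici {c : ι → ℝ} (hc : ∀ i, c i < 0) (a : ι → ℝ) :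
    IntegrableOn (fun t ↦ Real.exp (c ⬝ᵥ t)) (Set.Ici a) := by
  simp only [IntegrableOn, volume_pi_restrict_Ici, exp_dotProduct]
  exact Integrable.fintype_prod fun i ↦
    (integrableOn_Ici_iff_integrableOn_Ioi).2 (integrableOn_exp_mul_Ioi (hc i) (a i))

theorem integral_exp_dotProduct_Ici {c : ι → ℝ} (hc : ∀ i, c i < 0) (a : ι → ℝ) :
    ∫ t in Set.Ici a, Real.exp (c ⬝ᵥ t) = ∏ i, -Real.exp (c i * a i) / c i := by
  simp only [volume_pi_restrict_Ici, exp_dotProduct]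
  rw [integral_fintype_prod_eq_prod fun i x ↦ Real.exp (c i * x)]
  simp only [integral_Ici_eq_integral_Ioi, integral_exp_mul_Ioi (hc _)]

variable [DecidableEq ι] {A : Matrix ι ι ℝ} {ξ : ι → ℝ}

theorem integrableOn_exp_dotProduct_toLin'_image_Ici (h : ∀ i, (ξ ᵥ* A) i < 0) (a : ι → ℝ) :
    IntegrableOn (fun x ↦ Real.exp (ξ ⬝ᵥ x)) (A.toLin' '' Set.Ici a) := by
  refine integrableOn_image_linearMap (by fun_prop) ?_
  simpa only [Matrix.toLin'_apply, Matrix.dotProduct_mulVec] using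
    integrableOn_exp_dotProduct_Ici h a

theorem integral_exp_dotProduct_toLin'_image_Ici (h : ∀ i, (ξ ᵥ* A) i < 0) (a : ι → ℝ) :
    ∫ x in A.toLin' '' Set.Ici a, Real.exp (ξ ⬝ᵥ x) =
      |A.det| * ∏ i, -Real.exp ((ξ ᵥ* A) i * a i) / (ξ ᵥ* A) i := by
  rw [setIntegral_image_linearMap (by fun_prop), LinearMap.det_toLin', smul_eq_mul]
  simp only [Matrix.toLin'_apply, Matrix.dotProduct_mulVec, integral_exp_dotProduct_Ici h]

theorem integral_exp_dotProduct_toLin'_image_Ici_zero (h : ∀ i, (ξ ᵥ* A) i < 0) :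
    ∫ x in A.toLin' '' Set.Ici 0, Real.exp (ξ ⬝ᵥ x) = |A.det| / ∏ i, -(ξ ᵥ* A) i := by
  rw [integral_exp_dotProduct_toLin'_image_Ici h, div_eq_mul_inv, ← Finset.prod_inv_distrib]
  simp only [Pi.zero_apply, mul_zero, Real.exp_zero, neg_div, one_div, inv_neg]

theorem setOf_nonneg_combination_eq_toLin'_image_Ici (m : ι → ι → ℝ) :
    {x | ∃ t : ι → ℝ, (∀ i, 0 ≤ t i) ∧ x = ∑ i, t i • m i} =
      (Matrix.of fun i j ↦ m j i).toLin' '' Set.Ici 0 := by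
  have hm (t : ι → ℝ) : (Matrix.of fun i j ↦ m j i).toLin' t = ∑ i, t i • m i := by
    ext j
    simp [Matrix.mulVec, dotProduct, mul_comm]
  ext x
  simp only [Set.mem_ofPred_eq, Set.mem_image, Set.mem_Ici, Pi.le_def, Pi.zero_apply, hm,
    eq_comm (a := x)]

end Exponential

theorem exp_integral_simplicial_cone_general {ι : Type*} [Fintype ι] [DecidableEq ι]
    (m : ι → ι → ℝ) (K : Set (ι → ℝ))
    (hK : K = {x | ∃ t : ι → ℝ, (∀ i, 0 ≤ t i) ∧ x = ∑ i, t i • m i})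
    (ξ : ι → ℝ) (hξ : ∀ i, ∑ j, ξ j * m i j < 0) :
    IntegrableOn (fun x : ι → ℝ ↦ Real.exp (∑ j, ξ j * x j)) K volume ∧
    (∫ x in K, Real.exp (∑ j, ξ j * x j)) =
      |Matrix.det (Matrix.of fun i j ↦ m j i)| / ∏ i, (-(∑ j, ξ j * m i j)) := by
  rw [hK, setOf_nonneg_combination_eq_toLin'_image_Ici]
  exact ⟨integrableOn_exp_dotProduct_toLin'_image_Ici hξ 0,
    integral_exp_dotProduct_toLin'_image_Ici_zero hξ⟩

/-- Exponential integral over a general full-dimensional simplicial cone: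
if `m 0, …, m (n-1)` are linearly independent in `ℝⁿ` and `⟨ξ, mᵢ⟩ < 0` for all `i`,
then `x ↦ e^{⟨ξ,x⟩}` is integrable on the cone `K` generated by the `mᵢ` and
`∫_K e^{⟨ξ,x⟩} dx = |det(m₁,…,m_n)| / ∏ᵢ (−⟨ξ,mᵢ⟩)`. -/
theorem exp_integral_simplicial_cone
    (n : ℕ) (m : Fin n → (Fin n → ℝ))
    (hind : LinearIndependent ℝ m)
    (K : Set (Fin n → ℝ))
    (hK : K = {x | ∃ t : Fin n → ℝ, (∀ i, 0 ≤ t i) ∧ x = ∑ i, t i • m i})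
    (ξ : Fin n → ℝ)
    (hξ : ∀ i : Fin n, (∑ j, ξ j * m i j) < 0) :
    IntegrableOn (fun x : Fin n → ℝ => Real.exp (∑ j, ξ j * x j)) K volume ∧
    (∫ x in K, Real.exp (∑ j, ξ j * x j))
      = |Matrix.det (Matrix.of fun i j => m j i)|
        / ∏ i : Fin n, (-(∑ j, ξ j * m i j)) :=
  exp_integral_simplicial_cone_general m K hK ξ hξ
end

section
/- For real t ≠ 0, define B(t) = 1/(1 − e^t) + 1/t. Let x, y be real numbers with x ≠ 0, y ≠ 0, x ≠ y, and x + y ≠ 0. Then B(−x)B(−y) + [B(x−y)B(x) + (1/x)(B(−y) − B(x−y)) − (1/(y−x))(B((x+y)/2) − B(x))] + [B(y−x)B(y) + (1/y)(B(−x) − B(y−x)) − (1/(x−y))(B((x+y)/2) − B(y))] = 1. -/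
/-- The function `B(t) = 1/(1 − e^t) + 1/t`. -/
noncomputable def Bfun (t : ℝ) : ℝ := 1 / (1 - Real.exp t) + 1 / t

/-!
Write `B(t) = T(t) + 1/t` with `T(t) = 1/(1 - e^t)`. In the coefficient of a vertex whose edge
directions are `u`, `v`, the mixed terms `T(u)/v` and `T(v)/u` cancel, leaving `T(u)T(v) - 1/(uv)`
and one term for each edge. The two vertices of an edge see it with opposite signs, so the edge
terms cancel in the sum, whatever complement map was chosen. The rest is Brion's formula for the
triangle dilated to a point, which contains one lattice point (`∑ T(u)T(v) = 1`) and has volume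
zero (`∑ 1/(uv) = 0`). Both are Lagrange interpolation of the constant polynomial `1`: the first is
its value at `0` for the nodes `1`, `e^x`, `e^y`, the second its quadratic coefficient for the nodes
`0`, `x`, `y`.
-/

section Interpolation

variable {F ι : Type*} [Field F] [DecidableEq ι] {s : Finset ι} {v : ι → F}

theorem sum_prod_inv_sub_eq_zero (hs : s.Nontrivial) (hv : Set.InjOn v s) :
    ∑ i ∈ s, ∏ j ∈ s.erase i, (v i - v j)⁻¹ = 0 := by
  have hcard : 1 < s.card := Finset.one_lt_card_iff_nontrivial.mpr hs
  have hdeg : (1 : Polynomial F).degree < s.card := by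
    rw [Polynomial.degree_one]
    exact_mod_cast zero_lt_one.trans hcard
  have hcoeff := Lagrange.coeff_eq_sum hv hdeg
  rw [Polynomial.coeff_one, if_neg (Nat.sub_pos_of_lt hcard).ne'] at hcoeff
  simpa only [Polynomial.eval_one, one_div, Finset.prod_inv_distrib] using hcoeff.symm

theorem sum_prod_inv_one_sub_div_eq_one (hs : s.Nonempty) (hv : Set.InjOn v s)
    (hv0 : ∀ i ∈ s, v i ≠ 0) :
    ∑ i ∈ s, ∏ j ∈ s.erase i, (1 - v i / v j)⁻¹ = 1 := by
  have heval := congrArg (Polynomial.eval 0) (Lagrange.sum_basis hv hs)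
  rw [Polynomial.eval_finsetSum, Polynomial.eval_one] at heval
  refine Eq.trans ?_ heval
  refine Finset.sum_congr rfl fun i _ ↦ ?_
  rw [Lagrange.basis, Polynomial.eval_prod]
  refine Finset.prod_congr rfl fun j hj ↦ ?_
  have hj0 : v j ≠ 0 := hv0 j (Finset.mem_of_mem_erase hj)
  calc
    (1 - v i / v j)⁻¹ = -((v i - v j)⁻¹ * v j) := by
      rw [one_sub_div hj0, inv_div, ← neg_sub (v i), div_neg, div_eq_inv_mul]
    _ = (Lagrange.basisDivisor (v i) (v j)).eval 0 := by
      simp [Lagrange.basisDivisor]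

end Interpolation

theorem sum_prod_inv_one_sub_exp_eq_one {ι : Type*} [DecidableEq ι] {s : Finset ι} {ξ : ι → ℝ}
    (hs : s.Nonempty) (hξ : Set.InjOn ξ s) :
    ∑ i ∈ s, ∏ j ∈ s.erase i, (1 - Real.exp (ξ i - ξ j))⁻¹ = 1 := by
  simpa only [Function.comp_apply, Real.exp_sub] using
    sum_prod_inv_one_sub_div_eq_one hs (Real.exp_injective.comp_injOn hξ)
      fun i _ ↦ Real.exp_ne_zero (ξ i)

theorem sum_prod_erase_fin_three {R : Type*} [CommSemiring R] (f : Fin 3 → Fin 3 → R) :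
    ∑ i, ∏ j ∈ Finset.univ.erase i, f i j =
      f 0 1 * f 0 2 + f 1 0 * f 1 2 + f 2 0 * f 2 1 := by
  have erase_zero : Finset.univ.erase (0 : Fin 3) = {1, 2} := rfl
  have erase_one : Finset.univ.erase (1 : Fin 3) = {0, 2} := rfl
  have erase_two : Finset.univ.erase (2 : Fin 3) = {0, 1} := rfl
  simp [Fin.sum_univ_three, erase_zero, erase_one, erase_two]

/-- The coefficient `r^Ψ(σ)`, evaluated at a point `ξ`, of a maximal cone `σ` in the plane that is
dual to the cone on a lattice basis `m₁`, `m₂`. Here `u = ⟨m₁, ξ⟩` and `v = ⟨m₂, ξ⟩`; the numbers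
`p` and `q` stand for the values of `B` at the representatives of `m₂` modulo `m₁` and of `m₁`
modulo `m₂` that the complement map selects. -/
noncomputable def toddCoeff (u v p q : ℝ) : ℝ :=
  Bfun u * Bfun v + 1 / u * (p - Bfun v) + 1 / v * (q - Bfun u)

theorem toddCoeff_eq (u v p q : ℝ) :
    toddCoeff u v p q =
      (1 - Real.exp u)⁻¹ * (1 - Real.exp v)⁻¹ + p / u + q / v - u⁻¹ * v⁻¹ := by
  unfold toddCoeff Bfun
  ring

theorem todd_coeffs_sum_to_one_general {x y : ℝ} (hx : x ≠ 0) (hy : y ≠ 0) (hxy : x ≠ y)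
    (p q r : ℝ) :
    toddCoeff (-x) (-y) p q + toddCoeff x (x - y) p r + toddCoeff y (y - x) q r = 1 := by
  have hinj : Function.Injective ![0, x, y] := by
    simp [Function.Injective, Fin.forall_fin_succ, hx, hy, hxy, hx.symm, hy.symm, hxy.symm]
  have lattice_points := sum_prod_inv_one_sub_exp_eq_one Finset.univ_nonempty hinj.injOn
  have volume := sum_prod_inv_sub_eq_zero Finset.univ_nontrivial hinj.injOn
  rw [sum_prod_erase_fin_three] at lattice_points volume
  simp only [Matrix.cons_val, zero_sub, sub_zero] at lattice_points volume
  have edge : r / (y - x) = -(r / (x - y)) := by rw [← neg_sub x, div_neg]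
  rw [toddCoeff_eq, toddCoeff_eq, toddCoeff_eq, edge]
  linear_combination lattice_points - volume

/-- The identity `r^Ψ(σ₀) + r^Ψ(σ₁) + r^Ψ(σ₂) = 1` for the three equivariant Todd
class coefficients of the standard triangle. -/
theorem todd_coeffs_sum_to_one (x y : ℝ)
    (hx : x ≠ 0) (hy : y ≠ 0) (hxy : x ≠ y) (hxy' : x + y ≠ 0) :
    Bfun (-x) * Bfun (-y)
    + (Bfun (x - y) * Bfun x + (1 / x) * (Bfun (-y) - Bfun (x - y))
        - (1 / (y - x)) * (Bfun ((x + y) / 2) - Bfun x))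
    + (Bfun (y - x) * Bfun y + (1 / y) * (Bfun (-x) - Bfun (y - x))
        - (1 / (x - y)) * (Bfun ((x + y) / 2) - Bfun y)) = 1 := by
  linear_combination (norm := (simp only [toddCoeff, ← neg_sub x y, div_neg]; ring))
    todd_coeffs_sum_to_one_general hx hy hxy (Bfun (-y)) (Bfun (-x)) (Bfun ((x + y) / 2))
end

section
/- For real t ≠ 0, define B(t) = 1/(1 − e^t) + 1/t. Let ξ₁, ξ₂ be real numbers with ξ₁ < 0, ξ₂ < 0, and ξ₁ ≠ ξ₂, and let T = {(s,t) ∈ ℝ² : s ≥ 0, t ≥ 0, s + t ≤ 1}. Then 1 + e^{ξ₁} + e^{ξ₂} = B(ξ₁)B(ξ₂) + e^{ξ₁}·[B(ξ₂−ξ₁)B(−ξ₁) − (1/ξ₁)(B(ξ₂) − B(ξ₂−ξ₁)) + (1/(ξ₂−ξ₁))(B(−(ξ₁+ξ₂)/2) − B(−ξ₁))] + e^{ξ₂}·[B(ξ₁−ξ₂)B(−ξ₂) − (1/ξ₂)(B(ξ₁) − B(ξ₁−ξ₂)) + (1/(ξ₁−ξ₂))(B(−(ξ₁+ξ₂)/2)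 − B(−ξ₂))] + B(ξ₂)·(e^{ξ₁} − 1)/ξ₁ + B(ξ₁)·(e^{ξ₂} − 1)/ξ₂ + B(−(ξ₁+ξ₂)/2)·(e^{ξ₂} − e^{ξ₁})/(ξ₂−ξ₁) + ∫_T e^{ξ₁ s + ξ₂ t} ds dt. -/
open MeasureTheory

/-!
At a vertex `v` with primitive edge vectors `u`, `w`, put `x = ⟪ξ, u⟫` and `y = ⟪ξ, w⟫`. The tangent
cone at `v` has lattice-point sum `e^⟪ξ,v⟫ / ((1 - e^x) (1 - e^y))` and exponential integral
`e^⟪ξ,v⟫ / (x y)`, and each edge coming out of `v` has exponential integral `-e^⟪ξ,v⟫ / x` or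
`-e^⟪ξ,v⟫ / y`. By Brion's theorem, the sums and the integrals over the triangle and over its edges
are the totals of these vertex contributions, so the identity is a sum of one local identity per
vertex. The vertex coefficient is what makes the local identity true, whatever coefficients the
edges are given.
-/

/-- The coefficient which the vertex of a unimodular planar cone receives in the local
Euler–Maclaurin formula. Here `x` and `y` are the pairings of `ξ` with the two generators of the
cone, and `α` and `β` are the coefficients of the rays they span. -/
noncomputable def vertexCoeff (x y α β : ℝ) : ℝ :=
  Bfun x * Bfun y + 1 / x * (α - Bfun y) + 1 / y * (β - Bfun x)

theorem one_div_one_sub_exp_mul_eq_vertexCoeff (x y α β : ℝ) :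
    1 / ((1 - Real.exp x) * (1 - Real.exp y)) =
      vertexCoeff x y α β - α / x - β / y + 1 / (x * y) := by
  have one_div_one_sub_exp (t : ℝ) : 1 / (1 - Real.exp t) = Bfun t - 1 / t := by
    rw [Bfun, add_sub_cancel_right]
  rw [← one_div_mul_one_div, one_div_one_sub_exp, one_div_one_sub_exp, vertexCoeff]
  ring

/-- With the vertices of the triangle encoded by the monomials `1`, `a`, `b`, this is the Lagrange
form of the complete homogeneous polynomial `h₁(1, a, b)`. -/
theorem one_add_add_eq_sum_vertex {K : Type*} [Field K] {a b : K} (ha : a ≠ 0) (hb : b ≠ 0)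
    (ha1 : a ≠ 1) (hb1 : b ≠ 1) (hab : a ≠ b) :
    1 + a + b = 1 / ((1 - a) * (1 - b)) + a * (1 / ((1 - a⁻¹) * (1 - b / a))) +
      b * (1 / ((1 - b⁻¹) * (1 - a / b))) := by
  have h1a : 1 - a ≠ 0 := sub_ne_zero.2 ha1.symm
  have h1b : 1 - b ≠ 0 := sub_ne_zero.2 hb1.symm
  have hab' : a - b ≠ 0 := sub_ne_zero.2 hab
  have at_a : a * (1 / ((1 - a⁻¹) * (1 - b / a))) = -a ^ 3 / ((1 - a) * (a - b)) := by
    rw [← neg_sub a⁻¹, inv_eq_one_div, div_sub_one ha, one_sub_div ha]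
    field_simp
  have at_b : b * (1 / ((1 - b⁻¹) * (1 - a / b))) = b ^ 3 / ((1 - b) * (a - b)) := by
    rw [← neg_sub b⁻¹, ← neg_sub (a / b), inv_eq_one_div, div_sub_one hb, div_sub_one hb]
    field_simp
  rw [at_a, at_b]
  field_simp
  ring

theorem one_add_exp_add_exp_eq_sum_vertex {x y : ℝ} (hx : x ≠ 0) (hy : y ≠ 0) (hxy : x ≠ y) :
    1 + Real.exp x + Real.exp y =
      1 / ((1 - Real.exp x) * (1 - Real.exp y)) +
      Real.exp x * (1 / ((1 - Real.exp (-x)) * (1 - Real.exp (y - x)))) +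
      Real.exp y * (1 / ((1 - Real.exp (-y)) * (1 - Real.exp (x - y)))) := by
  simp only [Real.exp_neg, Real.exp_sub]
  exact one_add_add_eq_sum_vertex (Real.exp_ne_zero x) (Real.exp_ne_zero y)
    (mt (Real.exp_eq_one_iff x).1 hx) (mt (Real.exp_eq_one_iff y).1 hy)
    (Real.exp_injective.ne hxy)

theorem setIntegral_region_between_cc {α E : Type*} [MeasurableSpace α] [NormedAddCommGroup E]
    [NormedSpace ℝ E] {μ : Measure α} [SFinite μ] {s : Set α} {f g : α → ℝ} {F : α × ℝ → E}
    (hs : MeasurableSet s) (hf : Measurable f) (hg : Measurable g) (hfg : ∀ x ∈ s, f x ≤ g x)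
    (hF : IntegrableOn F {p | p.1 ∈ s ∧ p.2 ∈ Set.Icc (f p.1) (g p.1)} (μ.prod volume)) :
    ∫ p in {p : α × ℝ | p.1 ∈ s ∧ p.2 ∈ Set.Icc (f p.1) (g p.1)}, F p ∂μ.prod volume =
      ∫ x in s, (∫ t in f x..g x, F (x, t)) ∂μ := by
  have hR := measurableSet_region_between_cc hf hg hs
  rw [← integral_indicator hR, integral_prod _ (hF.integrable_indicator hR),
    ← integral_indicator hs]
  congr with x
  by_cases hx : x ∈ s
  · have slice (t : ℝ) : Set.indicator {p : α × ℝ | p.1 ∈ s ∧ p.2 ∈ Set.Icc (f p.1) (g p.1)} F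
        (x, t) = Set.indicator (Set.Icc (f x) (g x)) (fun t => F (x, t)) t := by
      simp [Set.indicator, hx]
    simp only [slice]
    rw [Set.indicator_of_mem hx, integral_indicator measurableSet_Icc,
      integral_Icc_eq_integral_Ioc, intervalIntegral.integral_of_le (hfg x hx)]
  · simp [hx]

/-- The triangle with vertices `(0, 0)`, `(1, 0)` and `(0, 1)`. -/
def stdTriangle : Set (ℝ × ℝ) := {p | 0 ≤ p.1 ∧ 0 ≤ p.2 ∧ p.1 + p.2 ≤ 1}

theorem stdTriangle_eq_region_between_cc :
    stdTriangle = {p | p.1 ∈ Set.Icc 0 1 ∧ p.2 ∈ Set.Icc 0 (1 - p.1)} := by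
  ext ⟨s, t⟩
  simp only [stdTriangle, Set.mem_ofPred_eq, Set.mem_Icc]
  grind

theorem isCompact_stdTriangle : IsCompact stdTriangle := by
  refine (isCompact_Icc (a := ((0, 0) : ℝ × ℝ)) (b := (1, 1))).of_isClosed_subset ?_ ?_
  · exact (isClosed_le continuous_const continuous_fst).inter
      ((isClosed_le continuous_const continuous_snd).inter
        (isClosed_le (continuous_fst.add continuous_snd) continuous_const))
  · rintro ⟨s, t⟩ ⟨hs, ht, hst⟩
    dsimp only at hs ht hst
    exact ⟨⟨hs, ht⟩, by constructor <;> dsimp only <;> linarith⟩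

theorem setIntegral_stdTriangle {E : Type*} [NormedAddCommGroup E] [NormedSpace ℝ E]
    {F : ℝ × ℝ → E} (hF : IntegrableOn F stdTriangle) :
    ∫ p in stdTriangle, F p = ∫ s in 0..1, ∫ t in 0..1 - s, F (s, t) := by
  rw [stdTriangle_eq_region_between_cc, Measure.volume_eq_prod] at hF ⊢
  rw [setIntegral_region_between_cc measurableSet_Icc measurable_const (by fun_prop)
      (fun s hs => sub_nonneg.2 hs.2) hF,
    integral_Icc_eq_integral_Ioc, intervalIntegral.integral_of_le zero_le_one]

theorem integral_exp_add_mul {c : ℝ} (hc : c ≠ 0) (a b d : ℝ) :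
    ∫ t in a..b, Real.exp (d + c * t) = (Real.exp (d + c * b) - Real.exp (d + c * a)) / c := by
  rw [intervalIntegral.integral_comp_add_mul _ hc, integral_exp, smul_eq_mul, inv_mul_eq_div]

theorem setIntegral_stdTriangle_exp {x y : ℝ} (hx : x ≠ 0) (hy : y ≠ 0) (hxy : x ≠ y) :
    ∫ p in stdTriangle, Real.exp (x * p.1 + y * p.2) =
      1 / (x * y) + Real.exp x * (1 / (-x * (y - x))) + Real.exp y * (1 / (-y * (x - y))) := by
  have hd : x - y ≠ 0 := sub_ne_zero.2 hxy
  have inner (s : ℝ) : ∫ t in 0..1 - s, Real.exp (x * s + y * t) =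
      (Real.exp (y + (x - y) * s) - Real.exp (0 + x * s)) / y := by
    rw [integral_exp_add_mul hy]
    ring_nf
  calc ∫ p in stdTriangle, Real.exp (x * p.1 + y * p.2)
      = ∫ s in 0..1, (Real.exp (y + (x - y) * s) - Real.exp (0 + x * s)) / y := by
        rw [setIntegral_stdTriangle
          (ContinuousOn.integrableOn_compact isCompact_stdTriangle (by fun_prop))]
        simp only [inner]
    _ = ((Real.exp x - Real.exp y) / (x - y) - (Real.exp x - 1) / x) / y := by
        rw [intervalIntegral.integral_div, intervalIntegral.integral_sub
            (Continuous.intervalIntegrable (by fun_prop) _ _)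
            (Continuous.intervalIntegrable (by fun_prop) _ _),
          integral_exp_add_mul hd, integral_exp_add_mul hx]
        simp only [mul_one, mul_zero, add_zero, zero_add, Real.exp_zero, add_sub_cancel]
    _ = _ := by
        rw [← neg_sub x y]
        field_simp
        ring

theorem euler_maclaurin_triangle_general {x y : ℝ} (hx : x ≠ 0) (hy : y ≠ 0) (hxy : x ≠ y)
    (α β γ : ℝ) :
    1 + Real.exp x + Real.exp y =
      vertexCoeff x y α β
      + Real.exp x * vertexCoeff (-x) (y - x) α γ
      + Real.exp y * vertexCoeff (-y) (x - y) β γ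
      + α * ((Real.exp x - 1) / x)
      + β * ((Real.exp y - 1) / y)
      + γ * ((Real.exp y - Real.exp x) / (y - x))
      + ∫ p in stdTriangle, Real.exp (x * p.1 + y * p.2) := by
  rw [one_add_exp_add_exp_eq_sum_vertex hx hy hxy,
    one_div_one_sub_exp_mul_eq_vertexCoeff x y α β,
    one_div_one_sub_exp_mul_eq_vertexCoeff (-x) (y - x) α γ,
    one_div_one_sub_exp_mul_eq_vertexCoeff (-y) (x - y) β γ,
    setIntegral_stdTriangle_exp hx hy hxy]
  have hγ : γ / (x - y) = -(γ / (y - x)) := by rw [← neg_sub y x, div_neg]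
  rw [hγ]
  ring

/-- The local Euler–Maclaurin (sum–integral interpolation) identity for the
standard triangle with vertices `(0,0)`, `(1,0)`, `(0,1)`. -/
theorem euler_maclaurin_triangle (ξ₁ ξ₂ : ℝ)
    (h1 : ξ₁ < 0) (h2 : ξ₂ < 0) (h12 : ξ₁ ≠ ξ₂)
    (T : Set (ℝ × ℝ))
    (hT : T = {p : ℝ × ℝ | 0 ≤ p.1 ∧ 0 ≤ p.2 ∧ p.1 + p.2 ≤ 1}) :
    1 + Real.exp ξ₁ + Real.exp ξ₂ =
      Bfun ξ₁ * Bfun ξ₂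
      + Real.exp ξ₁ *
          (Bfun (ξ₂ - ξ₁) * Bfun (-ξ₁)
            - (1 / ξ₁) * (Bfun ξ₂ - Bfun (ξ₂ - ξ₁))
            + (1 / (ξ₂ - ξ₁)) * (Bfun (-(ξ₁ + ξ₂) / 2) - Bfun (-ξ₁)))
      + Real.exp ξ₂ *
          (Bfun (ξ₁ - ξ₂) * Bfun (-ξ₂)
            - (1 / ξ₂) * (Bfun ξ₁ - Bfun (ξ₁ - ξ₂))
            + (1 / (ξ₁ - ξ₂)) * (Bfun (-(ξ₁ + ξ₂) / 2) - Bfun (-ξ₂)))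
      + Bfun ξ₂ * ((Real.exp ξ₁ - 1) / ξ₁)
      + Bfun ξ₁ * ((Real.exp ξ₂ - 1) / ξ₂)
      + Bfun (-(ξ₁ + ξ₂) / 2) * ((Real.exp ξ₂ - Real.exp ξ₁) / (ξ₂ - ξ₁))
      + ∫ p in T, Real.exp (ξ₁ * p.1 + ξ₂ * p.2) := by
  obtain rfl : T = stdTriangle := hT
  rw [euler_maclaurin_triangle_general h1.ne h2.ne h12 (Bfun ξ₂) (Bfun ξ₁) (Bfun (-(ξ₁ + ξ₂) / 2))]
  simp only [vertexCoeff]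
  ring
end

section
/- For real t ≠ 0, define B(t) = 1/(1 − e^t) + 1/t. Define r₁(x,y) = B(x−y)B(x) + (1/x)(B(−y) − B(x−y)) − (1/(y−x))(B((x+y)/2) − B(x)) on the set U = {(x,y) ∈ ℝ² : x ≠ 0, y ≠ 0, x ≠ y, x + y ≠ 0}. Then r₁(x,y) tends to 3/8 as (x,y) tends to (0,0) within U. -/
open Filter

/-- The Todd coefficient `r₁(x,y) = r^Ψ(σ₁)` of the standard triangle. -/
noncomputable def r1fun (p : ℝ × ℝ) : ℝ :=
  Bfun (p.1 - p.2) * Bfun p.1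
    + (1 / p.1) * (Bfun (-p.2) - Bfun (p.1 - p.2))
    - (1 / (p.2 - p.1)) * (Bfun ((p.1 + p.2) / 2) - Bfun p.1)

/-!
The function `B` has a removable singularity at `0`: it is the quotient `φ₂ / φ₁` of the entire
functions `φₙ(t) = ∑ tᵏ / (k + n)!`, so its extension has value `1/2` and derivative `-1/12` at `0`.
Since `-y - (x - y) = -x` and `(x + y)/2 - x = (y - x)/2`, the singular terms of `r₁` are multiples
of difference quotients of `B` whose two base points both tend to `0`. Strict differentiability
gives their limits, and the value at the origin is `(1/2)² + 1/12 + 1/24 = 3/8`.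
-/

open Function NormedSpace Topology
open scoped Nat

section Slope

variable {𝕜 E α : Type*} [NontriviallyNormedField 𝕜] [NormedAddCommGroup E] [NormedSpace 𝕜 E]

theorem tendsto_slope_of_hasStrictDerivAt {f : 𝕜 → E} {f' : E} {x : 𝕜}
    (hf : HasStrictDerivAt f f' x) {l : Filter α} {u v : α → 𝕜} (hu : Tendsto u l (𝓝 x))
    (hv : Tendsto v l (𝓝 x)) (huv : ∀ᶠ a in l, u a ≠ v a) :
    Tendsto (fun a ↦ slope f (u a) (v a)) l (𝓝 f') := by
  have h_error := hf.hasStrictFDerivAt.isLittleO.comp_tendsto (hv.prodMk_nhds hu)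
  have h_limit := h_error.tendsto_inv_smul_nhds_zero.add_const f'
  rw [zero_add] at h_limit
  refine h_limit.congr' ?_
  filter_upwards [huv] with a ha
  have h_ne : v a - u a ≠ 0 := sub_ne_zero.2 ha.symm
  simp [slope_def_module, smul_sub, inv_smul_smul₀ h_ne]

end Slope

section ExpPhi

theorem coeff_expSeries {𝕜 : Type*} [NontriviallyNormedField 𝕜] (n : ℕ) :
    (expSeries 𝕜 𝕜).coeff n = (n ! : 𝕜)⁻¹ := by
  rw [expSeries_eq_ofScalars, FormalMultilinearSeries.coeff_ofScalars]

variable {𝕂 : Type*} [RCLike 𝕂]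

/-- The function `φₙ(t) = ∑ tᵏ / (k + n)!`, encoded as the `n`-fold difference quotient at `0` of
the exponential; `φ₁` and `φ₂` are the denominator and numerator of the extension of `B` to `0`. -/
noncomputable def expPhi (n : ℕ) : 𝕂 → 𝕂 := (swap dslope 0)^[n] exp

theorem hasFPowerSeriesAt_expPhi (n : ℕ) :
    HasFPowerSeriesAt (expPhi n) (FormalMultilinearSeries.fslope^[n] (expSeries 𝕂 𝕂)) 0 :=
  exp_hasFPowerSeriesAt_zero.has_fpower_series_iterate_dslope_fslope n

theorem expPhi_apply_zero (n : ℕ) : expPhi n (0 : 𝕂) = (n ! : 𝕂)⁻¹ := by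
  rw [← (hasFPowerSeriesAt_expPhi n).coeff_zero 1, ← FormalMultilinearSeries.coeff,
    FormalMultilinearSeries.coeff_iterate_fslope, zero_add, coeff_expSeries]

theorem hasStrictDerivAt_expPhi_zero (n : ℕ) :
    HasStrictDerivAt (expPhi n) ((n + 1)! : 𝕂)⁻¹ 0 := by
  rw [← coeff_expSeries, add_comm, ← FormalMultilinearSeries.coeff_iterate_fslope]
  exact (hasFPowerSeriesAt_expPhi n).hasStrictDerivAt

theorem expPhi_succ_of_ne_zero (n : ℕ) {t : 𝕂} (ht : t ≠ 0) :
    expPhi (n + 1) t = (expPhi n t - (n ! : 𝕂)⁻¹) / t := by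
  have h_succ : expPhi (n + 1) = dslope (expPhi n : 𝕂 → 𝕂) 0 := iterate_succ_apply' _ _ _
  rw [h_succ, dslope_of_ne _ ht, slope_def_field, expPhi_apply_zero, sub_zero]

end ExpPhi

theorem Bfun_eq_expPhi_div {t : ℝ} (ht : t ≠ 0) : Bfun t = expPhi 2 t / expPhi 1 t := by
  have h_one : expPhi 1 t = (Real.exp t - 1) / t := by
    simpa [expPhi, Real.exp_eq_exp_ℝ] using expPhi_succ_of_ne_zero 0 ht
  have h_two : expPhi 2 t = (expPhi 1 t - 1) / t := by
    simpa using expPhi_succ_of_ne_zero 1 ht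
  have h_exp : Real.exp t - 1 ≠ 0 := by simpa [sub_ne_zero] using ht
  rw [Bfun, h_two, h_one, ← neg_sub (Real.exp t), one_div_neg_eq_neg_one_div]
  field

theorem update_Bfun_zero_eq_expPhi_div :
    update Bfun 0 (1 / 2) = fun t ↦ expPhi 2 t / expPhi 1 t := by
  refine update_eq_iff.2 ⟨?_, fun t ht ↦ Bfun_eq_expPhi_div ht⟩
  norm_num [expPhi_apply_zero]

theorem hasStrictDerivAt_update_Bfun_zero :
    HasStrictDerivAt (update Bfun 0 (1 / 2)) (-1 / 12) 0 := by
  have h_ne : expPhi 1 (0 : ℝ) ≠ 0 := by simp [expPhi_apply_zero]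
  rw [update_Bfun_zero_eq_expPhi_div]
  refine ((hasStrictDerivAt_expPhi_zero 2).fun_div (hasStrictDerivAt_expPhi_zero 1)
    h_ne).congr_deriv ?_
  norm_num [expPhi_apply_zero, Nat.factorial]

/-- The Todd coefficient `r₁` with an arbitrary function `f` in place of `B`, written with
difference quotients; it allows `B` to be replaced by its extension to `0`. -/
def r1Functional {k : Type*} [Field k] (f : k → k) (p : k × k) : k :=
  f (p.1 - p.2) * f p.1 - slope f (p.1 - p.2) (-p.2) - slope f p.1 ((p.1 + p.2) / 2) / 2

theorem r1fun_eq_r1Functional_Bfun : r1fun = r1Functional Bfun := by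
  funext ⟨x, y⟩
  have h_left : -y - (x - y) = -x := by ring
  have h_right : (x + y) / 2 - x = (y - x) / 2 := by ring
  simp only [r1fun, r1Functional, slope_def_field, h_left, h_right]
  field

theorem r1Functional_congr {k : Type*} [Field k] [NeZero (2 : k)] {f g : k → k}
    (hfg : Set.EqOn f g {0}ᶜ) {p : k × k} (hx : p.1 ≠ 0) (hy : p.2 ≠ 0) (hxy : p.1 ≠ p.2)
    (hadd : p.1 + p.2 ≠ 0) : r1Functional f p = r1Functional g p := by
  simp only [r1Functional, slope_def_field, hfg hx, hfg (neg_ne_zero.2 hy),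
    hfg (sub_ne_zero.2 hxy), hfg (div_ne_zero hadd two_ne_zero)]

theorem tendsto_r1Functional {𝕜 : Type*} [NontriviallyNormedField 𝕜] [NeZero (2 : 𝕜)]
    {f : 𝕜 → 𝕜} {c : 𝕜} (hf : HasStrictDerivAt f c 0) :
    Tendsto (r1Functional f) (𝓝[{p | p.1 ≠ 0 ∧ p.1 ≠ p.2}] (0, 0))
      (𝓝 (f 0 * f 0 - c - c / 2)) := by
  set l := 𝓝[{p : 𝕜 × 𝕜 | p.1 ≠ 0 ∧ p.1 ≠ p.2}] (0, 0)
  have h_mem : ∀ᶠ p in l, p.1 ≠ 0 ∧ p.1 ≠ p.2 := eventually_mem_nhdsWithin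
  have tendsto_zero {u : 𝕜 × 𝕜 → 𝕜} (hu : Continuous u) (hu₀ : u (0, 0) = 0) :
      Tendsto u l (𝓝 0) := (hu.tendsto' _ _ hu₀).mono_left nhdsWithin_le_nhds
  have h_fst : Tendsto (fun p : 𝕜 × 𝕜 ↦ p.1) l (𝓝 0) := tendsto_zero (by fun_prop) rfl
  have h_neg : Tendsto (fun p : 𝕜 × 𝕜 ↦ -p.2) l (𝓝 0) := tendsto_zero (by fun_prop) (by simp)
  have h_sub : Tendsto (fun p : 𝕜 × 𝕜 ↦ p.1 - p.2) l (𝓝 0) :=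
    tendsto_zero (by fun_prop) (by simp)
  have h_mid : Tendsto (fun p : 𝕜 × 𝕜 ↦ (p.1 + p.2) / 2) l (𝓝 0) :=
    tendsto_zero (by fun_prop) (by simp)
  have h_slope_left := tendsto_slope_of_hasStrictDerivAt hf h_sub h_neg <| by
    filter_upwards [h_mem] with p hp h_eq
    exact hp.1 (by linear_combination h_eq)
  have h_slope_right := tendsto_slope_of_hasStrictDerivAt hf h_fst h_mid <| by
    filter_upwards [h_mem] with p hp h_eq
    rw [eq_div_iff two_ne_zero] at h_eq
    exact hp.2 (by linear_combination h_eq)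
  have h_cont : Tendsto f (𝓝 0) (𝓝 (f 0)) := hf.hasDerivAt.continuousAt
  exact (((h_cont.comp h_sub).mul (h_cont.comp h_fst)).sub h_slope_left).sub
    (h_slope_right.div_const 2)

/-- `r₁(x,y) → 3/8` as `(x,y) → (0,0)` within
`U = {(x,y) : x ≠ 0, y ≠ 0, x ≠ y, x + y ≠ 0}`. -/
theorem r1_tendsto_three_eighths :
    Tendsto r1fun
      (nhdsWithin (0, 0)
        {p : ℝ × ℝ | p.1 ≠ 0 ∧ p.2 ≠ 0 ∧ p.1 ≠ p.2 ∧ p.1 + p.2 ≠ 0})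
      (nhds (3 / 8)) := by
  have h_lim := tendsto_r1Functional hasStrictDerivAt_update_Bfun_zero
  rw [update_self, show (1 / 2 * (1 / 2) - -1 / 12 - -1 / 12 / 2 : ℝ) = 3 / 8 by norm_num] at h_lim
  rw [r1fun_eq_r1Functional_Bfun]
  refine (h_lim.mono_left (nhdsWithin_mono _ fun p hp ↦ ⟨hp.1, hp.2.2.1⟩)).congr' ?_
  filter_upwards [self_mem_nhdsWithin] with p ⟨hx, hy, hxy, hadd⟩
  exact r1Functional_congr (fun t ht ↦ update_of_ne ht _ _) hx hy hxy hadd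
end

section
/- For real t ≠ 0, define B(t) = 1/(1 − e^t) + 1/t. Define r₁(x,y) = B(x−y)B(x) + (1/x)(B(−y) − B(x−y)) − (1/(y−x))(B((x+y)/2) − B(x)) on the set U = {(x,y) ∈ ℝ² : x ≠ 0, y ≠ 0, x ≠ y, x + y ≠ 0}. Then (r₁(x,y) − (3/8 − x/12 + y/24)) / √(x² + y²) tends to 0 as (x,y) tends to (0,0) within U. -/
open Filter

/-!
In terms of difference quotients,
`r₁(x, y) = B(x - y) B(x) - B[x - y, -y] - ½ B[x, (x + y)/2]`, where `B[s, t] = slope B s t`.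
The singularity of `B` at `0` is removable, and the extension is analytic with value `1/2` and
derivative `-1/12`. Since `B - 1/2` is odd, its second derivative vanishes at `0`, so that
`B[s, t] = -1/12 + o(‖(s, t)‖)` by the mean value inequality. Only the product contributes linear
terms: it is `1/4 - x/12 + y/24 + o(‖(x, y)‖)`, and the quotients add `1/12 + 1/24`.
-/

open Asymptotics Topology

section Slope

variable {𝕜 E : Type*} [RCLike 𝕜] [NormedAddCommGroup E] [NormedSpace 𝕜 E]
  {f f' : 𝕜 → E} {a : 𝕜}

lemma isLittleO_slope_of_hasDerivAt (hf : ∀ᶠ x in 𝓝 a, HasDerivAt f (f' x) x)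
    (hf' : f' =o[𝓝 a] fun x => x - a) :
    (fun p : 𝕜 × 𝕜 => slope f p.1 p.2) =o[𝓝 (a, a)] fun p => p - (a, a) := by
  refine isLittleO_iff.2 fun ε hε => ?_
  obtain ⟨δ, hδ, hball⟩ := Metric.eventually_nhds_iff_ball.1 (hf.and (hf'.bound hε))
  filter_upwards [Metric.ball_mem_nhds (a, a) hδ] with p hp
  have hsub : Metric.closedBall a ‖p - (a, a)‖ ⊆ Metric.ball a δ :=
    Metric.closedBall_subset_ball (mem_ball_iff_norm.1 hp)
  have hmean : ‖f p.2 - f p.1‖ ≤ ε * ‖p - (a, a)‖ * ‖p.2 - p.1‖ :=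
    (convex_closedBall a ‖p - (a, a)‖).norm_image_sub_le_of_norm_hasDerivWithin_le
      (fun x hx => (hball x (hsub hx)).1.hasDerivWithinAt)
      (fun x hx => (hball x (hsub hx)).2.trans
        (mul_le_mul_of_nonneg_left (mem_closedBall_iff_norm.1 hx) hε.le))
      (mem_closedBall_iff_norm.2 (norm_fst_le (p - (a, a))))
      (mem_closedBall_iff_norm.2 (norm_snd_le (p - (a, a))))
  rw [slope_def_module, norm_smul, norm_inv, inv_mul_eq_div]
  exact div_le_of_le_mul₀ (norm_nonneg _) (by positivity) hmean

lemma isLittleO_slope_sub_deriv {f'' : E} (hf : ∀ᶠ x in 𝓝 a, HasDerivAt f (f' x) x)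
    (hf' : HasDerivAt f' f'' a) :
    (fun p : 𝕜 × 𝕜 => slope f p.1 p.2 - (f' a + ((p.1 + p.2) / 2 - a) • f''))
      =o[𝓝[{p | p.1 ≠ p.2}] (a, a)] fun p => p - (a, a) := by
  -- On the second-order Taylor polynomial at `a` the slope equals its affine approximation exactly.
  let g : 𝕜 → E := fun x => f x - (x - a) • f' a - ((x - a) ^ 2 / 2) • f''
  have hg : ∀ᶠ x in 𝓝 a, HasDerivAt g (f' x - f' a - (x - a) • f'') x := by
    filter_upwards [hf] with x hx
    have hlin : HasDerivAt (fun y => y - a) 1 x := (hasDerivAt_id x).sub_const a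
    have hquad : HasDerivAt (fun y => (y - a) ^ 2 / 2) (x - a) x := by
      simpa using (hlin.fun_pow 2).div_const 2
    simpa using (hx.fun_sub (hlin.smul_const (f' a))).fun_sub (hquad.smul_const f'')
  have hslope := isLittleO_slope_of_hasDerivAt hg hf'.isLittleO
  refine (hslope.mono nhdsWithin_le_nhds).congr' ?_ .rfl
  filter_upwards [self_mem_nhdsWithin] with p hp
  have hne : p.2 - p.1 ≠ 0 := sub_ne_zero.2 (Ne.symm hp)
  simp only [slope_def_module, g]
  match_scalars <;> field_simp <;> ring

end Slope

lemma exists_analyticAt_exp_eq_sum_add_pow_mul (n : ℕ) :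
    ∃ R : ℝ → ℝ, AnalyticAt ℝ R 0 ∧
      ∀ t, Real.exp t = ∑ i ∈ Finset.range n, t ^ i / i.factorial + t ^ n * R t := by
  obtain ⟨R, hR, hexp⟩ := (analyticAt_rexp (x := 0)).exists_eq_sum_add_pow_mul n
  exact ⟨R, hR, by simpa [iteratedDeriv_eq_iterate] using hexp⟩

/-- The continuous extension of `B` to its removable singularity at `0`, where `Bfun` takes the junk
value `0`; it has the same difference quotients as `B` away from `0`. -/
noncomputable def BfunExt : ℝ → ℝ := Function.update Bfun 0 (1 / 2)

lemma BfunExt_of_ne {t : ℝ} (ht : t ≠ 0) : BfunExt t = Bfun t :=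
  Function.update_of_ne ht _ _

lemma BfunExt_zero : BfunExt 0 = 1 / 2 :=
  Function.update_self _ _ _

lemma slope_Bfun {s t : ℝ} (hs : s ≠ 0) (ht : t ≠ 0) : slope Bfun s t = slope BfunExt s t := by
  simp only [slope_def_field, BfunExt_of_ne hs, BfunExt_of_ne ht]

lemma BfunExt_neg (t : ℝ) : BfunExt (-t) = 1 - BfunExt t := by
  rcases eq_or_ne t 0 with rfl | ht
  · norm_num [BfunExt_zero]
  have hexp : Real.exp t - 1 ≠ 0 := sub_ne_zero.2 (mt (Real.exp_eq_one_iff t).1 ht)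
  have hexp' : 1 - Real.exp t ≠ 0 := by rwa [← neg_sub, neg_ne_zero]
  rw [BfunExt_of_ne ht, BfunExt_of_ne (neg_ne_zero.2 ht), Bfun, Bfun, Real.exp_neg]
  field_simp
  ring

lemma exists_analyticAt_BfunExt_eq_div :
    ∃ R : ℝ → ℝ, AnalyticAt ℝ R 0 ∧
      ∀ t, BfunExt t = (1 / 2 + t / 6 + t ^ 2 * R t) / (1 + t / 2 + t ^ 2 / 6 + t ^ 3 * R t) := by
  obtain ⟨R, hR, hexp⟩ := exists_analyticAt_exp_eq_sum_add_pow_mul 4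
  refine ⟨R, hR, fun t => ?_⟩
  rcases eq_or_ne t 0 with rfl | ht
  · norm_num [BfunExt_zero]
  set D := 1 + t / 2 + t ^ 2 / 6 + t ^ 3 * R t with hD
  have hexpD : 1 - Real.exp t = -(t * D) := by
    rw [hexp, hD]
    simp only [Finset.sum_range_succ, Finset.sum_range_zero, Nat.factorial]
    push_cast
    ring
  have hD0 : D ≠ 0 := by
    intro h
    exact ht ((Real.exp_eq_one_iff t).1 (by linear_combination -hexpD + t * h))
  rw [BfunExt_of_ne ht, Bfun, hexpD]
  field_simp
  rw [hD]
  ring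

lemma analyticAt_BfunExt : AnalyticAt ℝ BfunExt 0 := by
  obtain ⟨R, hR, hB⟩ := exists_analyticAt_BfunExt_eq_div
  rw [funext hB]
  exact AnalyticAt.fun_div (by fun_prop) (by fun_prop) (by norm_num)

lemma hasDerivAt_BfunExt : HasDerivAt BfunExt (-1 / 12) 0 := by
  obtain ⟨R, hR, hB⟩ := exists_analyticAt_BfunExt_eq_div
  have hid := hasDerivAt_id' (0 : ℝ)
  have hRem (n : ℕ) : HasDerivAt (fun t => t ^ (n + 2) * R t) 0 0 := by
    simpa using (hid.fun_pow (n + 2)).fun_mul hR.differentiableAt.hasDerivAt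
  have hnum : HasDerivAt (fun t => 1 / 2 + t / 6 + t ^ 2 * R t) (1 / 6) 0 := by
    simpa only [add_zero] using ((hid.div_const 6).const_add (1 / 2)).fun_add (hRem 0)
  have hden : HasDerivAt (fun t => 1 + t / 2 + t ^ 2 / 6 + t ^ 3 * R t) (1 / 2) 0 := by
    simpa using (((hid.div_const 2).const_add 1).fun_add
      ((hid.fun_pow 2).div_const 6)).fun_add (hRem 1)
  rw [funext hB]
  exact (hnum.fun_div hden (by norm_num)).congr_deriv (by norm_num)

lemma hasDerivAt_deriv_BfunExt : HasDerivAt (deriv BfunExt) 0 0 := by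
  have heven (t : ℝ) : deriv BfunExt (-t) = deriv BfunExt t := by
    have h := deriv_comp_neg BfunExt t
    rw [funext BfunExt_neg, deriv_const_sub] at h
    exact (neg_injective h).symm
  have hodd := deriv_comp_neg (deriv BfunExt) 0
  rw [funext heven, neg_zero] at hodd
  simpa [self_eq_neg.1 hodd] using analyticAt_BfunExt.deriv.differentiableAt.hasDerivAt

lemma isLittleO_slope_BfunExt :
    (fun p : ℝ × ℝ => slope BfunExt p.1 p.2 + 1 / 12) =o[𝓝[{p | p.1 ≠ p.2}] 0] fun p => p := by
  have hdiff : ∀ᶠ t in 𝓝 0, HasDerivAt BfunExt (deriv BfunExt t) t :=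
    analyticAt_BfunExt.eventually_analyticAt.mono fun t ht => ht.differentiableAt.hasDerivAt
  refine (isLittleO_slope_sub_deriv hdiff hasDerivAt_deriv_BfunExt).congr (fun p => ?_) sub_zero
  rw [hasDerivAt_BfunExt.deriv, smul_zero]
  ring

lemma isLittleO_slope_BfunExt_comp {V : Type*} [NormedAddCommGroup V] [NormedSpace ℝ V]
    (L M : V →L[ℝ] ℝ) {U : Set V} (hLM : ∀ v ∈ U, L v ≠ M v) :
    (fun v => slope BfunExt (L v) (M v) + 1 / 12) =o[𝓝[U] 0] fun v => v := by
  have htendsto : Tendsto (L.prod M) (𝓝[U] 0) (𝓝[{p | p.1 ≠ p.2}] 0) := by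
    have hmaps : Set.MapsTo (L.prod M) U {p | p.1 ≠ p.2} := hLM
    simpa only [map_zero] using
      (L.prod M).continuous.continuousWithinAt.tendsto_nhdsWithin (x := 0) hmaps
  exact (isLittleO_slope_BfunExt.comp_tendsto htendsto).trans_isBigO ((L.prod M).isBigO_id _)

lemma isLittleO_BfunExt_mul_BfunExt :
    (fun p : ℝ × ℝ => BfunExt (p.1 - p.2) * BfunExt p.1 - (1 / 4 - p.1 / 12 + p.2 / 24))
      =o[𝓝 0] fun p => p := by
  have hcomp (L : ℝ × ℝ →L[ℝ] ℝ) :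
      HasFDerivAt (fun p => BfunExt (L p)) ((-1 / 12 : ℝ) • L) 0 :=
    HasDerivAt.comp_hasFDerivAt (h₂ := BfunExt) 0 (by simpa using hasDerivAt_BfunExt)
      L.hasFDerivAt
  have hmul := ((hcomp (.fst ℝ ℝ ℝ - .snd ℝ ℝ ℝ)).fun_mul (hcomp (.fst ℝ ℝ ℝ))).isLittleO
  refine hmul.congr (fun p => ?_) sub_zero
  simp only [sub_apply, ContinuousLinearMap.coe_fst', ContinuousLinearMap.coe_snd',
    Prod.fst_zero, Prod.snd_zero, sub_self, BfunExt_zero, sub_zero, add_apply, smul_apply,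
    smul_eq_mul]
  ring

lemma norm_le_sqrt_sq_add_sq (p : ℝ × ℝ) : ‖p‖ ≤ √(p.1 ^ 2 + p.2 ^ 2) :=
  norm_prod_le_iff.2 ⟨Real.abs_le_sqrt (by linarith [sq_nonneg p.2]),
    Real.abs_le_sqrt (by linarith [sq_nonneg p.1])⟩

lemma r1fun_eq_slope (p : ℝ × ℝ) :
    r1fun p = Bfun (p.1 - p.2) * Bfun p.1 - slope Bfun (p.1 - p.2) (-p.2)
      - slope Bfun p.1 ((p.1 + p.2) / 2) / 2 := by
  have h₁ : -p.2 - (p.1 - p.2) = -p.1 := by ring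
  have h₂ : (p.1 + p.2) / 2 - p.1 = (p.2 - p.1) / 2 := by ring
  rw [r1fun, slope_def_field, slope_def_field, h₁, h₂, div_neg, div_div_eq_mul_div]
  ring

lemma r1fun_eq_BfunExt {p : ℝ × ℝ} (hx : p.1 ≠ 0) (hy : p.2 ≠ 0) (hxy : p.1 ≠ p.2)
    (hadd : p.1 + p.2 ≠ 0) :
    r1fun p = BfunExt (p.1 - p.2) * BfunExt p.1 - slope BfunExt (p.1 - p.2) (-p.2)
      - slope BfunExt p.1 ((p.1 + p.2) / 2) / 2 := by
  have hsub : p.1 - p.2 ≠ 0 := sub_ne_zero.2 hxy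
  rw [r1fun_eq_slope, slope_Bfun hsub (neg_ne_zero.2 hy),
    slope_Bfun hx (div_ne_zero hadd two_ne_zero), BfunExt_of_ne hsub, BfunExt_of_ne hx]

lemma isLittleO_r1fun_sub :
    (fun p : ℝ × ℝ => r1fun p - (3 / 8 - p.1 / 12 + p.2 / 24))
      =o[𝓝[{p : ℝ × ℝ | p.1 ≠ 0 ∧ p.2 ≠ 0 ∧ p.1 ≠ p.2 ∧ p.1 + p.2 ≠ 0}] (0, 0)] fun p => p := by
  set U := {p : ℝ × ℝ | p.1 ≠ 0 ∧ p.2 ≠ 0 ∧ p.1 ≠ p.2 ∧ p.1 + p.2 ≠ 0}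
  let fst := ContinuousLinearMap.fst ℝ ℝ ℝ
  let snd := ContinuousLinearMap.snd ℝ ℝ ℝ
  have hmul := isLittleO_BfunExt_mul_BfunExt.mono (nhdsWithin_le_nhds (s := U))
  have hslope₁ : (fun p : ℝ × ℝ => slope BfunExt (p.1 - p.2) (-p.2) + 1 / 12)
      =o[𝓝[U] 0] fun p => p :=
    isLittleO_slope_BfunExt_comp (fst - snd) (-snd) fun p hp h => hp.1 (sub_eq_neg_self.1 h)
  have hslope₂ : (fun p : ℝ × ℝ => slope BfunExt p.1 ((p.1 + p.2) / 2) + 1 / 12)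
      =o[𝓝[U] 0] fun p => p := by
    have hne : ∀ p ∈ U, fst p ≠ ((2⁻¹ : ℝ) • (fst + snd)) p := by
      intro p hp h
      have h' : p.1 = 2⁻¹ * (p.1 + p.2) := h
      exact hp.2.2.1 (by linarith)
    exact (isLittleO_slope_BfunExt_comp fst ((2⁻¹ : ℝ) • (fst + snd)) hne).congr_left fun p => by
      simp [fst, snd, div_eq_inv_mul, mul_add]
  refine ((hmul.sub hslope₁).sub (hslope₂.const_mul_left (1 / 2))).congr' ?_ .rfl
  filter_upwards [self_mem_nhdsWithin] with p ⟨hx, hy, hxy, hadd⟩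
  rw [r1fun_eq_BfunExt hx hy hxy hadd]
  ring

/-- First-order expansion `r₁(x,y) = 3/8 − x/12 + y/24 + o(‖(x,y)‖)` at the origin,
within `U = {(x,y) : x ≠ 0, y ≠ 0, x ≠ y, x + y ≠ 0}`. -/
theorem r1_first_order_expansion :
    Tendsto
      (fun p : ℝ × ℝ =>
        (r1fun p - (3 / 8 - p.1 / 12 + p.2 / 24)) / Real.sqrt (p.1 ^ 2 + p.2 ^ 2))
      (nhdsWithin (0, 0)
        {p : ℝ × ℝ | p.1 ≠ 0 ∧ p.2 ≠ 0 ∧ p.1 ≠ p.2 ∧ p.1 + p.2 ≠ 0})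
      (nhds 0) := by
  have hnorm : (fun p : ℝ × ℝ => p) =O[𝓝 (0, 0)] fun p => √(p.1 ^ 2 + p.2 ^ 2) :=
    .of_bound' (.of_forall fun p => (norm_le_sqrt_sq_add_sq p).trans (Real.le_norm_self _))
  exact (isLittleO_r1fun_sub.trans_isBigO (hnorm.mono nhdsWithin_le_nhds)).tendsto_div_nhds_zero
end
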